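/- Let (u, ϱ) be a smooth solution on [0,∞) of the perturbation system with no-slip boundary condition, with 0 < α₁ ≤ ϱ₀ + ρ_s ≤ α₂ < ∞, initial data (u₀, ϱ₀) ∈ H²(Ω) × L^∞(Ω), and f ∈ W^{2,∞}(Ω). Then ∫_Ω ϱ(t) f dx → 0 as t → ∞ if and only if there exist γ > 0 and β ∈ ℝ such that ‖ϱ₀+ρ_s+γf−β‖_{L²(Ω)}² − lim_{t→∞} ‖ϱ(t)+ρ_s+γf−β‖_{L²(Ω)}² = 2γ ∫_Ω ϱ₀ f dx (in particular the limit on the left exists). -/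

import Mathlib

/-!
Write `θ = ϱ + ρ_s`. The density equation says that `θ` is transported by the divergence-free
field `u`, which vanishes on `∂Ω`; hence `∫_Ω θ` and `∫_Ω θ²` are independent of time. Expanding
the square,
`‖θ(0) + γf - β‖² - ‖θ(t) + γf - β‖² = 2γ ∫ ϱ(0) f - 2γ ∫ ϱ(t) f` for all `γ`, `β` and `t ≥ 0`,
and both implications follow by letting `t → ∞`.

The conservation laws need the divergence theorem on `Ω` for `C¹` functions vanishing on `∂Ω`
(`integral_fderiv_eq_zero`). The extension by zero of such a function is Lipschitz with compact
support (`lipschitz_indicator`), so the integral over the plane of its line derivative vanishes, by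
the integration by parts formula for Lipschitz functions. That line derivative is the classical
derivative on `Ω` and is zero off the closure of `Ω`, while `∂Ω` is a null set, being part of a
regular level set of the defining function (`frontier_null`).
-/

open MeasureTheory Real Filter Topology Set
open scoped RealInnerProductSpace

noncomputable section

/-- The plane `ℝ²`. -/
abbrev E2 := EuclideanSpace ℝ (Fin 2)

/-- Divergence of a vector field on `ℝ²`. -/
def vdiv (u : E2 → E2) (x : E2) : ℝ :=
  ∑ i : Fin 2, fderiv ℝ u x (EuclideanSpace.single i 1) i

/-- Componentwise Laplacian of a vector field on `ℝ²`. -/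
def vlap (u : E2 → E2) (x : E2) : E2 :=
  ∑ j : Fin 2, fderiv ℝ (fun y => fderiv ℝ u y (EuclideanSpace.single j 1)) x
    (EuclideanSpace.single j 1)

/-- `Ω` is a bounded domain in `ℝ²` with smooth boundary. -/
def SmoothBoundedDomain (Ω : Set E2) : Prop :=
  IsOpen Ω ∧ Bornology.IsBounded Ω ∧ Ω.Nonempty ∧
    ∃ φ : E2 → ℝ, ContDiff ℝ (⊤ : ℕ∞) φ ∧ Ω = {x | φ x < 0} ∧
      ∀ x ∈ frontier Ω, fderiv ℝ φ x ≠ 0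

/-- Membership in the Sobolev space `H^k(Ω)` (square-integrable derivatives up to order `k`). -/
def MemHk {F : Type*} [NormedAddCommGroup F] [NormedSpace ℝ F]
    (k : ℕ) (Ω : Set E2) (g : E2 → F) : Prop :=
  ∀ j : ℕ, j ≤ k → IntegrableOn (fun x => ‖iteratedFDeriv ℝ j g x‖ ^ 2) Ω

/-- Joint smoothness of a solution `(u, ϱ, P)` of the system. -/
def SmoothSol (u : ℝ → E2 → E2) (ϱ P : ℝ → E2 → ℝ) : Prop :=
  ContDiff ℝ (⊤ : ℕ∞) (fun p : ℝ × E2 => u p.1 p.2) ∧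
    ContDiff ℝ (⊤ : ℕ∞) (fun p : ℝ × E2 => ϱ p.1 p.2) ∧
    ContDiff ℝ (⊤ : ℕ∞) (fun p : ℝ × E2 => P p.1 p.2)

/-- `ρ_s` is a steady hydrostatic density profile: there is a pressure `p_s` with
`∇p_s = −ρ_s ∇f` on `Ω`. -/
def Hydrostatic (Ω : Set E2) (f ρs : E2 → ℝ) : Prop :=
  ∃ ps : E2 → ℝ, ContDiff ℝ (⊤ : ℕ∞) ps ∧ ∀ x ∈ Ω, gradient ps x = -(ρs x • gradient f x)

/-- The 2D inhomogeneous incompressible Navier–Stokes perturbation system on `Ω`: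
`(ϱ+ρ_s) ∂_t u + (ϱ+ρ_s)(u·∇)u = ν Δu − ∇P − ϱ ∇f`, `∂_t ϱ + u·∇ϱ + u·∇ρ_s = 0`,
`∇·u = 0`, with the no-slip boundary condition `u|_{∂Ω} = 0`. -/
def PerturbationSystem (Ω : Set E2) (ν : ℝ) (f ρs : E2 → ℝ)
    (u : ℝ → E2 → E2) (ϱ P : ℝ → E2 → ℝ) : Prop :=
  (∀ t ∈ Ici (0:ℝ), ∀ x ∈ Ω,
    (ϱ t x + ρs x) • deriv (fun s => u s x) t
        + (ϱ t x + ρs x) • fderiv ℝ (u t) x (u t x)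
      = ν • vlap (u t) x - gradient (P t) x - ϱ t x • gradient f x) ∧
  (∀ t ∈ Ici (0:ℝ), ∀ x ∈ Ω,
    deriv (fun s => ϱ s x) t + fderiv ℝ (ϱ t) x (u t x) + fderiv ℝ ρs x (u t x) = 0) ∧
  (∀ t ∈ Ici (0:ℝ), ∀ x ∈ Ω, vdiv (u t) x = 0) ∧
  (∀ t ∈ Ici (0:ℝ), ∀ x ∈ frontier Ω, u t x = 0)

/-- `∇f ∈ W^{1,∞}(Ω)`. -/
def GradfW1inf (Ω : Set E2) (f : E2 → ℝ) : Prop :=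
  ∃ M : ℝ, ∀ x ∈ Ω, ‖gradient f x‖ ≤ M ∧ ‖iteratedFDeriv ℝ 2 f x‖ ≤ M

/-- `f ∈ W^{2,∞}(Ω)`. -/
def fW2inf (Ω : Set E2) (f : E2 → ℝ) : Prop :=
  ∃ M : ℝ, ∀ x ∈ Ω, |f x| ≤ M ∧ ‖gradient f x‖ ≤ M ∧ ‖iteratedFDeriv ℝ 2 f x‖ ≤ M

/-- A regular level set is null: the defining function is constant on `∂Ω`, so its derivative
would have to vanish at almost every point of `∂Ω`. -/
lemma frontier_null {Ω : Set E2} (hΩ : SmoothBoundedDomain Ω) : volume (frontier Ω) = 0 := by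
  obtain ⟨hopen, -, -, φ, hφ, hΩφ, hreg⟩ := hΩ
  have hzero : ∀ x ∈ frontier Ω, φ x = 0 := by
    intro x hx
    rw [hopen.frontier_eq] at hx
    have h1 : φ x ≤ 0 := by
      have : closure Ω ⊆ {x | φ x ≤ 0} := by
        apply closure_minimal
        · rw [hΩφ]; exact fun y (hy : φ y < 0) => hy.le
        · exact isClosed_le hφ.continuous continuous_const
      exact this hx.1
    have h2 : ¬ φ x < 0 := by
      intro h
      exact hx.2 (by rw [hΩφ]; exact h)
    linarith
  have hne : (EuclideanSpace.single 0 1 : E2) ≠ 0 := by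
    simp
  have happ : ApproximatesLinearOn (fun x => φ x • (EuclideanSpace.single 0 1 : E2))
      (0 : E2 →L[ℝ] E2) (frontier Ω) 0 := by
    intro x hx y hy
    simp [hzero x hx, hzero y hy]
  have hae := happ.norm_fderiv_sub_le volume isClosed_frontier.measurableSet
    (fun x => (fderiv ℝ φ x).smulRight (EuclideanSpace.single 0 1 : E2)) (by
      intro x _
      have := ((hφ.differentiable (by simp)) x).hasFDerivAt
      exact (this.smul_const _).hasFDerivWithinAt)
  rw [ae_restrict_iff' isClosed_frontier.measurableSet] at hae
  have : ∀ᵐ x : E2, x ∉ frontier Ω := by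
    filter_upwards [hae] with x hx hxf
    have h := hx hxf
    simp only [sub_zero, nonpos_iff_eq_zero, nnnorm_eq_zero] at h
    apply hreg x hxf
    ext v
    have := DFunLike.congr_fun h v
    simpa [hne] using this
  simpa [ae_iff] using this

/-- The extension by zero of a `C¹` function vanishing on the boundary of a bounded open set is
globally Lipschitz: a point of `Ω` is at least as far from any point outside `Ω` as from some
boundary point. -/
lemma lipschitz_indicator {Ω : Set E2} (hb : Bornology.IsBounded Ω)
    {g : E2 → ℝ} (hg : ContDiff ℝ 1 g) (h0 : ∀ x ∈ frontier Ω, g x = 0) :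
    ∃ K, LipschitzWith K (Ω.indicator g) := by
  obtain ⟨R, hR⟩ := hb.closure.subset_closedBall 0
  have hcont : Continuous (fun x => ‖fderiv ℝ g x‖₊) :=
    (hg.continuous_fderiv (by simp)).nnnorm
  obtain ⟨K, hK⟩ := ((isCompact_closedBall (0 : E2) R).image hcont).bddAbove
  have hlip : LipschitzOnWith K g (Metric.closedBall 0 R) :=
    (convex_closedBall (0 : E2) R).lipschitzOnWith_of_nnnorm_fderiv_le
      (fun x _ => hg.differentiable (by simp) x) (fun x hx => hK ⟨x, hx, rfl⟩)
  have hcross : ∀ x ∈ Ω, ∀ y ∉ Ω, ‖g x‖ ≤ K * dist x y := by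
    intro x hx y hy
    have hne : Ω ≠ univ := fun h => hy (h ▸ mem_univ y)
    obtain ⟨z, hz, hzd⟩ := exists_mem_frontier_infDist_compl_eq_dist hx hne
    have h1 := hlip.dist_le_mul x (hR (subset_closure hx)) z (hR (frontier_subset_closure hz))
    rw [h0 z hz, dist_zero_right] at h1
    refine h1.trans ?_
    rw [← hzd]
    gcongr
    exact Metric.infDist_le_dist_of_mem hy
  refine ⟨K, LipschitzWith.of_dist_le_mul fun x y => ?_⟩
  by_cases hx : x ∈ Ω <;> by_cases hy : y ∈ Ω
  · rw [indicator_of_mem hx, indicator_of_mem hy]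
    exact hlip.dist_le_mul x (hR (subset_closure hx)) y (hR (subset_closure hy))
  · rw [indicator_of_mem hx, indicator_of_notMem hy, dist_zero_right]
    exact hcross x hx y hy
  · rw [indicator_of_notMem hx, indicator_of_mem hy, dist_zero_left, dist_comm]
    exact hcross y hy x hx
  · rw [indicator_of_notMem hx, indicator_of_notMem hy, dist_self]
    positivity

lemma integral_fderiv_eq_zero {Ω : Set E2} (hΩ : SmoothBoundedDomain Ω)
    {g : E2 → ℝ} (hg : ContDiff ℝ 1 g) (h0 : ∀ x ∈ frontier Ω, g x = 0) (v : E2) :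
    ∫ x in Ω, fderiv ℝ g x v = 0 := by
  obtain ⟨K, hK⟩ := lipschitz_indicator hΩ.2.1 hg h0
  have hcs : HasCompactSupport (Ω.indicator g) :=
    HasCompactSupport.intro hΩ.2.1.isCompact_closure
      (fun x hx => indicator_of_notMem (fun h => hx (subset_closure h)) g)
  have key := LipschitzWith.integral_lineDeriv_mul_eq (μ := (volume : Measure E2))
    (LipschitzWith.const (1 : ℝ)) hK hcs (-v)
  simp only [neg_neg, mul_one] at key
  have hl : ∀ x : E2, lineDeriv ℝ (fun _ : E2 => (1 : ℝ)) x (-v) = 0 := by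
    intro x; simp [lineDeriv]
  simp only [hl, zero_mul, integral_zero] at key
  rw [← integral_indicator hΩ.1.measurableSet, key]
  apply integral_congr_ae
  have hnull : ∀ᵐ x : E2, x ∉ frontier Ω := by
    simpa [ae_iff] using frontier_null hΩ
  filter_upwards [hnull] with x hx
  by_cases hxΩ : x ∈ Ω
  · rw [indicator_of_mem hxΩ]
    have hev : Ω.indicator g =ᶠ[𝓝 x] g := by
      filter_upwards [hΩ.1.mem_nhds hxΩ] with y hy
      exact indicator_of_mem hy g
    rw [hev.lineDeriv_eq]
    exact ((hg.differentiable (by simp) x).lineDeriv_eq_fderiv).symm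
  · rw [indicator_of_notMem hxΩ]
    have hxc : x ∉ closure Ω := by
      intro h
      exact hx (by rw [hΩ.1.frontier_eq]; exact ⟨h, hxΩ⟩)
    have hev : Ω.indicator g =ᶠ[𝓝 x] fun _ => (0 : ℝ) := by
      filter_upwards [isClosed_closure.isOpen_compl.mem_nhds hxc] with y hy
      exact indicator_of_notMem (fun h => hy (subset_closure h)) g
    rw [hev.lineDeriv_eq]
    simp [lineDeriv]

lemma integrableOn_of_continuous {Ω : Set E2} (hΩ : SmoothBoundedDomain Ω)
    {g : E2 → ℝ} (hg : Continuous g) : IntegrableOn g Ω :=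
  (hg.continuousOn.integrableOn_compact hΩ.2.1.isCompact_closure).mono_set subset_closure

/-- A scalar has no net flux through `∂Ω` when carried by a divergence-free no-slip field: the
integrand is `div (η w)`. -/
lemma integral_advection_eq_zero {Ω : Set E2} (hΩ : SmoothBoundedDomain Ω)
    {w : E2 → E2} {η : E2 → ℝ} (hw : ContDiff ℝ 1 w) (hη : ContDiff ℝ 1 η)
    (hdiv : ∀ x ∈ Ω, vdiv w x = 0) (hbd : ∀ x ∈ frontier Ω, w x = 0) :
    ∫ x in Ω, fderiv ℝ η x (w x) = 0 := by
  have hwi : ∀ i : Fin 2, ContDiff ℝ 1 (fun x => w x i) := fun i => by fun_prop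
  have hgi : ∀ i : Fin 2, ContDiff ℝ 1 (fun x => η x * w x i) := fun i => hη.mul (hwi i)
  have hsum : ∀ x ∈ Ω, fderiv ℝ η x (w x)
      = ∑ i : Fin 2, fderiv ℝ (fun y => η y * w y i) x (EuclideanSpace.single i 1) := by
    intro x hx
    have hd := hdiv x hx
    have hηx := hη.differentiable (by simp) x
    have hwx := hw.differentiable (by simp) x
    have hcomp : ∀ i : Fin 2, ∀ v, fderiv ℝ (fun y => w y i) x v = fderiv ℝ w x v i := by
      intro i v
      have := ((EuclideanSpace.proj i : E2 →L[ℝ] ℝ).hasFDerivAt.comp x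
        hwx.hasFDerivAt).fderiv
      exact DFunLike.congr_fun this v
    have hprod : ∀ i : Fin 2,
        fderiv ℝ (fun y => η y * w y i) x (EuclideanSpace.single i 1)
          = η x * fderiv ℝ w x (EuclideanSpace.single i 1) i
            + w x i * fderiv ℝ η x (EuclideanSpace.single i 1) := by
      intro i
      rw [fderiv_fun_mul hηx ((hwi i).differentiable (by simp) x)]
      simp [hcomp]
    have hdecomp : w x = ∑ i : Fin 2, w x i • (EuclideanSpace.single i (1 : ℝ) : E2) := by
      ext j
      fin_cases j <;> simp
    simp only [hprod, Finset.sum_add_distrib, ← Finset.mul_sum]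
    unfold vdiv at hd
    rw [hd, mul_zero, zero_add]
    conv_lhs => rw [hdecomp]
    simp
  rw [setIntegral_congr_fun hΩ.1.measurableSet hsum, integral_finsetSum]
  · refine Finset.sum_eq_zero fun i _ => ?_
    apply integral_fderiv_eq_zero hΩ (hgi i)
    intro x hx
    simp [hbd x hx]
  · intro i _
    exact integrableOn_of_continuous hΩ
      (((hgi i).continuous_fderiv (by simp)).clm_apply continuous_const)

/-- Conservation of the integral of a transported scalar. -/
lemma transport_conserved {Ω : Set E2} (hΩ : SmoothBoundedDomain Ω)
    {u : ℝ → E2 → E2} {η : ℝ → E2 → ℝ}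
    (hu : ContDiff ℝ 1 (fun p : ℝ × E2 => u p.1 p.2))
    (hη : ContDiff ℝ 1 (fun p : ℝ × E2 => η p.1 p.2))
    (htr : ∀ t ∈ Ici (0:ℝ), ∀ x ∈ Ω,
      deriv (fun s => η s x) t + fderiv ℝ (η t) x (u t x) = 0)
    (hdiv : ∀ t ∈ Ici (0:ℝ), ∀ x ∈ Ω, vdiv (u t) x = 0)
    (hbd : ∀ t ∈ Ici (0:ℝ), ∀ x ∈ frontier Ω, u t x = 0) {t : ℝ} (ht : 0 ≤ t) :
    ∫ x in Ω, η t x = ∫ x in Ω, η 0 x := by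
  have hut : ∀ t, ContDiff ℝ 1 (u t) := fun t =>
    hu.comp (contDiff_const.prodMk contDiff_id)
  have hηt : ∀ t, ContDiff ℝ 1 (η t) := fun t =>
    hη.comp (contDiff_const.prodMk contDiff_id)
  -- the time derivative of `η`, as a jointly continuous function
  set D : ℝ × E2 → ℝ := fun p => fderiv ℝ (fun p : ℝ × E2 => η p.1 p.2) p (1, 0) with hD
  have hDc : Continuous D := (hη.continuous_fderiv (by simp)).clm_apply continuous_const
  have hDd : ∀ s x, HasDerivAt (fun s => η s x) (D (s, x)) s := by
    intro s x
    have h1 := (hη.differentiable (by simp) (s, x)).hasFDerivAt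
    have h2 : HasDerivAt (fun s : ℝ => (s, x)) ((1 : ℝ), (0 : E2)) s :=
      (hasDerivAt_id s).prodMk (hasDerivAt_const s x)
    exact h1.comp_hasDerivAt s h2
  have hder : ∀ s, HasDerivAt (fun s => ∫ x in Ω, η s x) (∫ x in Ω, D (s, x)) s := by
    intro s
    obtain ⟨C, hC⟩ := ((isCompact_closedBall s 1).prod
      hΩ.2.1.isCompact_closure).exists_bound_of_continuousOn hDc.continuousOn
    refine (hasDerivAt_integral_of_dominated_loc_of_deriv_le
      (F := η) (F' := fun s x => D (s, x)) (bound := fun _ => C)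
      (Metric.closedBall_mem_nhds s one_pos) ?_ ?_ ?_ ?_ ?_ ?_).2
    · exact Eventually.of_forall fun r => (hηt r).continuous.aestronglyMeasurable
    · exact integrableOn_of_continuous hΩ (hηt s).continuous
    · exact (hDc.comp (by fun_prop : Continuous fun x : E2 => (s, x))).aestronglyMeasurable
    · rw [ae_restrict_iff' hΩ.1.measurableSet]
      exact Eventually.of_forall fun x hx r hr => hC (r, x) ⟨hr, subset_closure hx⟩
    · exact integrableOn_of_continuous hΩ continuous_const
    · exact Eventually.of_forall fun x r _ => hDd r x
  have hzero : ∀ s, 0 ≤ s → ∫ x in Ω, D (s, x) = 0 := by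
    intro s hs
    have : ∀ x ∈ Ω, D (s, x) = -fderiv ℝ (η s) x (u s x) := by
      intro x hx
      have := htr s hs x hx
      rw [(hDd s x).deriv] at this
      linarith
    rw [setIntegral_congr_fun hΩ.1.measurableSet this, integral_neg,
      integral_advection_eq_zero hΩ (hut s) (hηt s) (hdiv s hs) (hbd s hs), neg_zero]
  refine constant_of_has_deriv_right_zero (a := 0) (b := t)
    (f := fun s => ∫ x in Ω, η s x)
    (fun s _ => (hder s).continuousAt.continuousWithinAt) ?_ t ⟨ht, le_rfl⟩
  intro s hs
  have := hder s
  rw [hzero s hs.1] at this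
  exact this.hasDerivWithinAt

/-- `∫_Ω ϱ(t) f dx → 0` as `t → ∞` if and only if there are `γ > 0`
and `β ∈ ℝ` with
`‖ϱ₀+ρ_s+γf−β‖_{L²}² − lim_{t→∞} ‖ϱ(t)+ρ_s+γf−β‖_{L²}² = 2γ ∫_Ω ϱ₀ f dx`. -/
theorem rho_f_limit_iff
    (Ω : Set E2) (hΩ : SmoothBoundedDomain Ω)
    (ν : ℝ) (hν : 0 < ν)
    (f ρs : E2 → ℝ) (hf : ContDiff ℝ (⊤ : ℕ∞) f) (hρs : ContDiff ℝ (⊤ : ℕ∞) ρs)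
    (hhyd : Hydrostatic Ω f ρs)
    (hfW2 : fW2inf Ω f)
    (u : ℝ → E2 → E2) (ϱ P : ℝ → E2 → ℝ)
    (hsmooth : SmoothSol u ϱ P)
    (hsys : PerturbationSystem Ω ν f ρs u ϱ P)
    (α₁ α₂ : ℝ) (hα₁ : 0 < α₁)
    (hinit : ∀ x ∈ Ω, α₁ ≤ ϱ 0 x + ρs x ∧ ϱ 0 x + ρs x ≤ α₂)
    -- initial data (u₀, ϱ₀) ∈ H²(Ω) × L^∞(Ω)
    (hu₀ : MemHk 2 Ω (u 0))
    (hϱ₀ : ∃ M : ℝ, ∀ x ∈ Ω, |ϱ 0 x| ≤ M) :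
    Tendsto (fun t => ∫ x in Ω, ϱ t x * f x) atTop (𝓝 0)
      ↔ ∃ γ > (0:ℝ), ∃ β : ℝ, ∃ L : ℝ,
          Tendsto (fun t => ∫ x in Ω, (ϱ t x + ρs x + γ * f x - β) ^ 2) atTop (𝓝 L) ∧
          (∫ x in Ω, (ϱ 0 x + ρs x + γ * f x - β) ^ 2) - L
            = 2 * γ * (∫ x in Ω, ϱ 0 x * f x) := by
  obtain ⟨hu, hϱ, -⟩ := hsmooth
  obtain ⟨-, htr, hdiv, hbd⟩ := hsys
  have hu1 : ContDiff ℝ 1 (fun p : ℝ × E2 => u p.1 p.2) := hu.of_le (by simp)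
  have hϱ1 : ContDiff ℝ 1 (fun p : ℝ × E2 => ϱ p.1 p.2) := hϱ.of_le (by simp)
  have hρs1 : ContDiff ℝ 1 ρs := hρs.of_le (by simp)
  have hθ1 : ContDiff ℝ 1 (fun p : ℝ × E2 => ϱ p.1 p.2 + ρs p.2) :=
    hϱ1.add (hρs1.comp contDiff_snd)
  have hϱt : ∀ t, ContDiff ℝ 1 (ϱ t) := fun t =>
    hϱ1.comp (contDiff_const.prodMk contDiff_id)
  have hϱx : ∀ x, ContDiff ℝ 1 (fun s => ϱ s x) := fun x =>
    hϱ1.comp (contDiff_id.prodMk contDiff_const)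
  -- the chain rule turns the equation of `θ = ϱ + ρ_s` into the one of `θ ^ k`
  have hcons : ∀ k : ℕ, ∀ t, 0 ≤ t →
      ∫ x in Ω, (ϱ t x + ρs x) ^ k = ∫ x in Ω, (ϱ 0 x + ρs x) ^ k := by
    intro k t ht
    refine transport_conserved (η := fun t x => (ϱ t x + ρs x) ^ k) hΩ hu1 (hθ1.pow k) ?_
      hdiv hbd ht
    intro s hs x hx
    have h1 : HasDerivAt (fun s => (ϱ s x + ρs x) ^ k) _ s :=
      ((((hϱx x).differentiable (by simp) s).hasDerivAt).add_const (ρs x)).pow k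
    have h2 : HasFDerivAt (fun x => (ϱ s x + ρs x) ^ k) _ x :=
      ((((hϱt s).differentiable (by simp) x).hasFDerivAt).add
        ((hρs1.differentiable (by simp) x).hasFDerivAt)).pow k
    rw [h1.deriv, h2.fderiv]
    have := htr s hs x hx
    simp only [smul_apply, add_apply, smul_eq_mul,
      nsmul_eq_mul, Pi.add_apply]
    linear_combination ((k : ℝ) * (ϱ s x + ρs x) ^ (k - 1)) * this
  have hfc := hf.continuous
  have hρc := hρs.continuous
  have hexp : ∀ γ β t : ℝ, ∫ x in Ω, (ϱ t x + ρs x + γ * f x - β) ^ 2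
      = (∫ x in Ω, (ϱ t x + ρs x) ^ 2) - 2 * β * (∫ x in Ω, (ϱ t x + ρs x) ^ 1)
        + 2 * γ * (∫ x in Ω, ϱ t x * f x)
        + ∫ x in Ω, (2 * γ * (ρs x * f x) + (γ * f x - β) ^ 2) := by
    intro γ β t
    have hϱc := (hϱt t).continuous
    rw [← integral_const_mul, ← integral_const_mul, ← integral_sub, ← integral_add,
      ← integral_add]
    · congr 1
      ext x
      ring
    all_goals exact integrableOn_of_continuous hΩ (by fun_prop)
  have hdiff : ∀ γ β t : ℝ, 0 ≤ t → ∫ x in Ω, (ϱ t x + ρs x + γ * f x - β) ^ 2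
      = ((∫ x in Ω, (ϱ 0 x + ρs x + γ * f x - β) ^ 2) - 2 * γ * (∫ x in Ω, ϱ 0 x * f x))
        + 2 * γ * (∫ x in Ω, ϱ t x * f x) := by
    intro γ β t ht
    rw [hexp, hexp, hcons 2 t ht, hcons 1 t ht]
    ring
  constructor
  · intro h
    refine ⟨1, one_pos, 0, _, ?_, sub_sub_cancel _ _⟩
    have h2 := (h.const_mul (2 * (1 : ℝ))).const_add
      ((∫ x in Ω, (ϱ 0 x + ρs x + 1 * f x - 0) ^ 2) - 2 * 1 * (∫ x in Ω, ϱ 0 x * f x))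
    rw [mul_zero, add_zero] at h2
    refine h2.congr' ?_
    filter_upwards [eventually_ge_atTop 0] with t ht
    exact (hdiff 1 0 t ht).symm
  · rintro ⟨γ, hγ, β, L, hL, heq⟩
    have h2 := (hL.sub_const L).const_mul (2 * γ)⁻¹
    rw [sub_self, mul_zero] at h2
    refine h2.congr' ?_
    filter_upwards [eventually_ge_atTop 0] with t ht
    rw [hdiff γ β t ht, ← heq]
    field_simp
    ring
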